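/- arXiv:1406.3877 — 8 statements merged into one kernel-verified Lean document; each statement's English description precedes it below -/
import Mathlib

section
/- (Existence of categoriser valuation) For every n×n attack matrix D with entries in {0,1}, the categoriser map F has at least one fixed point in [0,1]^n; equivalently, the system of equations v_i = 1/(1 + Σ_j D i j · v_j), i = 1,…,n, has at least one solution v ∈ [0,1]^n. -/
/-!
The categoriser map `F` is antitone on the complete lattice `[0,1]^n`, so `F ∘ F` is monotone and
has a least fixed point `a` (Knaster–Tarski). Then `b = F a` is also a fixed point of `F ∘ F`, so
`a ≤ b`, and `F b = a`. Both vectors are positive. Let `i` minimise `a i / b i` and let `t` be the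
minimum, so that `t * b ≤ a`. If `t < 1`, write `s = ∑ j, D i j * a j`; then
`a i = 1 / (1 + ∑ j, D i j * b j) ≥ 1 / (1 + s / t) = t / (t + s) > t / (1 + s) = t * b i = a i`,
a contradiction. Hence `t ≥ 1`, i.e. `b ≤ a`, so `a = b` is a fixed point of `F`.
-/

/-- The categoriser map of an attack matrix `D`. -/
noncomputable def catF {n : ℕ} (D : Fin n → Fin n → ℝ) (v : Fin n → ℝ) : Fin n → ℝ :=
  fun i => 1 / (1 + ∑ j, D i j * v j)

lemma catF_pos {n : ℕ} {D : Fin n → Fin n → ℝ} (hD : ∀ i j, 0 ≤ D i j) {v : Fin n → ℝ}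
    (hv : 0 ≤ v) (i : Fin n) : 0 < catF D v i := by
  have : 0 ≤ ∑ j, D i j * v j := Finset.sum_nonneg fun j _ => mul_nonneg (hD i j) (hv j)
  unfold catF
  positivity

lemma catF_le_one {n : ℕ} {D : Fin n → Fin n → ℝ} (hD : ∀ i j, 0 ≤ D i j) {v : Fin n → ℝ}
    (hv : 0 ≤ v) (i : Fin n) : catF D v i ≤ 1 := by
  have : 0 ≤ ∑ j, D i j * v j := Finset.sum_nonneg fun j _ => mul_nonneg (hD i j) (hv j)
  unfold catF
  rw [div_le_one (by positivity)]
  linarith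

lemma catF_anti {n : ℕ} {D : Fin n → Fin n → ℝ} (hD : ∀ i j, 0 ≤ D i j) {v w : Fin n → ℝ}
    (hv : 0 ≤ v) (hvw : v ≤ w) : catF D w ≤ catF D v := by
  intro i
  have h0 : 0 ≤ ∑ j, D i j * v j := Finset.sum_nonneg fun j _ => mul_nonneg (hD i j) (hv j)
  have h1 : ∑ j, D i j * v j ≤ ∑ j, D i j * w j :=
    Finset.sum_le_sum fun j _ => mul_le_mul_of_nonneg_left (hvw j) (hD i j)
  exact one_div_le_one_div_of_le (by positivity) (by linarith)

/-- By symmetry in `a` and `b`, this says that `catF D` has no nonnegative 2-cycle other than its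
fixed points. -/
lemma catF_two_cycle_le {n : ℕ} {D : Fin n → Fin n → ℝ} (hD : ∀ i j, 0 ≤ D i j)
    {a b : Fin n → ℝ} (ha : 0 ≤ a) (hb : 0 ≤ b) (hab : catF D a = b) (hba : catF D b = a) :
    b ≤ a := by
  intro k
  have pa : ∀ i, 0 < a i := fun i => hba ▸ catF_pos hD hb i
  have pb : ∀ i, 0 < b i := fun i => hab ▸ catF_pos hD ha i
  have : Nonempty (Fin n) := ⟨k⟩
  obtain ⟨i, hi⟩ := Finite.exists_min fun i => a i / b i
  set t := a i / b i with ht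
  have tpos : 0 < t := div_pos (pa i) (pb i)
  have key : ∀ j, t * b j ≤ a j := fun j => (le_div_iff₀ (pb j)).1 (hi j)
  rcases le_or_gt 1 t with h1 | h1
  · nlinarith [key k, pb k]
  · exfalso
    have eqt : a i = t * b i := by rw [ht, div_mul_cancel₀ _ (pb i).ne']
    have hs : t * ∑ j, D i j * b j ≤ ∑ j, D i j * a j := by
      rw [Finset.mul_sum]
      refine Finset.sum_le_sum fun j _ => ?_
      nlinarith [mul_le_mul_of_nonneg_left (key j) (hD i j)]
    have h0 : 0 ≤ ∑ j, D i j * b j := Finset.sum_nonneg fun j _ => mul_nonneg (hD i j) (hb j)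
    have h0' : 0 ≤ ∑ j, D i j * a j := Finset.sum_nonneg fun j _ => mul_nonneg (hD i j) (ha j)
    have e1 : a i = 1 / (1 + ∑ j, D i j * b j) := (congrFun hba i).symm
    have e2 : b i = 1 / (1 + ∑ j, D i j * a j) := (congrFun hab i).symm
    rw [e1, e2, mul_one_div, div_eq_div_iff (by positivity) (by positivity)] at eqt
    linarith

theorem stmt_1 (n : ℕ) (D : Fin n → Fin n → ℝ)
    (hD : ∀ i j, D i j = 0 ∨ D i j = 1) :
    ∃ v ∈ Set.Icc (0 : Fin n → ℝ) 1, catF D v = v := by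
  have hD0 : ∀ i j, 0 ≤ D i j := fun i j => by rcases hD i j with h | h <;> simp [h]
  -- `Fin n → [0,1]` rather than an interval of vectors: a complete lattice by the pointwise order.
  let f : (Fin n → Set.Icc (0 : ℝ) 1) → (Fin n → Set.Icc (0 : ℝ) 1) := fun v i =>
    ⟨catF D (fun j => (v j : ℝ)) i, (catF_pos hD0 (fun j => (v j).2.1) i).le,
      catF_le_one hD0 (fun j => (v j).2.1) i⟩
  have hf : Antitone f := fun v w h i => catF_anti hD0 (fun j => (v j).2.1) (fun j => h j) i
  let G : (Fin n → Set.Icc (0 : ℝ) 1) →o (Fin n → Set.Icc (0 : ℝ) 1) := ⟨f ∘ f, hf.comp hf⟩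
  have hG : f (f G.lfp) = G.lfp := G.map_lfp
  have hle : G.lfp ≤ f G.lfp := G.lfp_le_fixed (congrArg f hG)
  have hge := catF_two_cycle_le (D := D) (a := fun j => (G.lfp j : ℝ))
    (b := fun j => (f G.lfp j : ℝ)) hD0 (fun j => (G.lfp j).2.1) (fun j => (f G.lfp j).2.1) rfl
    (funext fun j => congrArg Subtype.val (congrFun hG j))
  refine ⟨fun j => (G.lfp j : ℝ), ⟨fun j => (G.lfp j).2.1, fun j => (G.lfp j).2.2⟩, ?_⟩
  exact le_antisymm hge (fun j => hle j)
end

section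
/- (Convergence of fixed-point iteration) Let D be an n×n attack matrix with entries in {0,1}, let F be its categoriser map, and let v* ∈ [0,1]^n be the unique fixed point of F. Then for every starting point v⁽⁰⁾ ∈ [0,1]^n, the sequence defined by v⁽ᵏ⁾ = F(v⁽ᵏ⁻¹⁾) for k ≥ 1 converges to v*. -/
lemma catF_sum_bounds {n : ℕ} {D : Fin n → Fin n → ℝ} (hD : ∀ i j, D i j = 0 ∨ D i j = 1)
    {a : Fin n → ℝ} (ha : a ∈ Set.Icc (0 : Fin n → ℝ) 1) (i : Fin n) :
    0 ≤ ∑ j, D i j * a j ∧ ∑ j, D i j * a j ≤ n := by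
  have h0 : ∀ j, 0 ≤ a j := ha.1
  have h1 : ∀ j, a j ≤ 1 := ha.2
  constructor
  · refine Finset.sum_nonneg fun j _ => ?_
    rcases hD i j with h | h <;> simp [h, h0 j]
  · have h : ∑ j, D i j * a j ≤ ∑ _j : Fin n, (1 : ℝ) := by
      refine Finset.sum_le_sum fun j _ => ?_
      rcases hD i j with h | h <;> simp [h, h1 j]
    simpa using h

lemma catF_bounds {n : ℕ} {D : Fin n → Fin n → ℝ} (hD : ∀ i j, D i j = 0 ∨ D i j = 1)
    {a : Fin n → ℝ} (ha : a ∈ Set.Icc (0 : Fin n → ℝ) 1) (i : Fin n) :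
    1 / (1 + n : ℝ) ≤ catF D a i ∧ catF D a i ≤ 1 := by
  obtain ⟨h0, h1⟩ := catF_sum_bounds hD ha i
  unfold catF
  constructor
  · exact one_div_le_one_div_of_le (by linarith) (by linarith)
  · rw [div_le_one (by linarith)]
    linarith

lemma catF_mem {n : ℕ} {D : Fin n → Fin n → ℝ} (hD : ∀ i j, D i j = 0 ∨ D i j = 1)
    {a : Fin n → ℝ} (ha : a ∈ Set.Icc (0 : Fin n → ℝ) 1) :
    catF D a ∈ Set.Icc (0 : Fin n → ℝ) 1 :=
  ⟨fun i => le_trans (by simp only [Pi.zero_apply]; positivity) (catF_bounds hD ha i).1,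
    fun i => (catF_bounds hD ha i).2⟩

/-- One-sided ratio contraction: the order is reversed, and the excess `c` of the ratio over `1`
shrinks by the factor `n / (n + 1)`. -/
lemma catF_ratio {n : ℕ} {D : Fin n → Fin n → ℝ} (hD : ∀ i j, D i j = 0 ∨ D i j = 1)
    {a b : Fin n → ℝ} (ha : a ∈ Set.Icc (0 : Fin n → ℝ) 1)
    (hb : b ∈ Set.Icc (0 : Fin n → ℝ) 1) {c : ℝ} (hc : 0 ≤ c)
    (hab : ∀ i, a i ≤ (1 + c) * b i) (i : Fin n) :
    catF D b i ≤ (1 + (n / (n + 1) : ℝ) * c) * catF D a i := by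
  obtain ⟨hs0, -⟩ := catF_sum_bounds hD ha i
  obtain ⟨hw0, hw1⟩ := catF_sum_bounds hD hb i
  have hsw : ∑ j, D i j * a j ≤ (1 + c) * ∑ j, D i j * b j := by
    rw [Finset.mul_sum]
    refine Finset.sum_le_sum fun j _ => ?_
    rcases hD i j with h | h <;> simp [h, hab j]
  unfold catF
  set s := ∑ j, D i j * a j
  set w := ∑ j, D i j * b j
  -- Monotonicity of `x / (1 + x)`, applied to `w ≤ n`.
  have hq : w ≤ (n / (n + 1) : ℝ) * (1 + w) := by
    rw [div_mul_eq_mul_div, le_div_iff₀ (by positivity)]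
    linarith
  have hcq := mul_le_mul_of_nonneg_left hq hc
  rw [mul_one_div, div_le_div_iff₀ (by linarith) (by linarith)]
  linarith

theorem stmt_3 (n : ℕ) (D : Fin n → Fin n → ℝ)
    (hD : ∀ i j, D i j = 0 ∨ D i j = 1)
    (vstar : Fin n → ℝ) (hvstar : vstar ∈ Set.Icc (0 : Fin n → ℝ) 1)
    (hfix : catF D vstar = vstar)
    (v : ℕ → Fin n → ℝ) (hv0 : v 0 ∈ Set.Icc (0 : Fin n → ℝ) 1)
    (hiter : ∀ k, v (k + 1) = catF D (v k)) :
    Filter.Tendsto v Filter.atTop (nhds vstar) := by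
  have hmem : ∀ k, v k ∈ Set.Icc (0 : Fin n → ℝ) 1 := by
    intro k
    induction k with
    | zero => exact hv0
    | succ k ih => rw [hiter]; exact catF_mem hD ih
  have hratio : ∀ k : ℕ, (∀ i, v (k + 1) i ≤ (1 + n * (n / (n + 1) : ℝ) ^ k) * vstar i) ∧
      ∀ i, vstar i ≤ (1 + n * (n / (n + 1) : ℝ) ^ k) * v (k + 1) i := by
    intro k
    induction k with
    | zero =>
      -- `v 0` may have zero coordinates, so ratios are only controlled from `v 1` on.
      have key : ∀ a b : Fin n → ℝ, a ∈ Set.Icc (0 : Fin n → ℝ) 1 →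
          b ∈ Set.Icc (0 : Fin n → ℝ) 1 → ∀ i, catF D a i ≤ (1 + n) * catF D b i := by
        intro a b ha hb i
        have h := (catF_bounds hD hb i).1
        rw [div_le_iff₀ (by positivity)] at h
        linarith [(catF_bounds hD ha i).2]
      have h1 := key _ _ hv0 hvstar
      have h2 := key _ _ hvstar hv0
      rw [hfix, ← hiter] at h1 h2
      simpa using ⟨h1, h2⟩
    | succ k ih =>
      have hc : 0 ≤ n * (n / (n + 1) : ℝ) ^ k := by positivity
      have h1 := catF_ratio hD hvstar (hmem (k + 1)) hc ih.2
      have h2 := catF_ratio hD (hmem (k + 1)) hvstar hc ih.1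
      rw [hfix, ← hiter] at h1 h2
      have e : (n / (n + 1) : ℝ) * (n * (n / (n + 1) : ℝ) ^ k)
          = n * (n / (n + 1) : ℝ) ^ (k + 1) := by ring
      rw [e] at h1 h2
      exact ⟨h1, h2⟩
  rw [← Filter.tendsto_add_atTop_iff_nat 1, tendsto_pi_nhds]
  intro i
  have hlim : Filter.Tendsto (fun k : ℕ => n * (n / (n + 1) : ℝ) ^ k) Filter.atTop (nhds 0) := by
    have h := tendsto_pow_atTop_nhds_zero_of_lt_one (r := (n / (n + 1) : ℝ)) (by positivity)
      (by rw [div_lt_one (by positivity)]; linarith)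
    simpa using h.const_mul (n : ℝ)
  rw [tendsto_iff_dist_tendsto_zero]
  refine squeeze_zero (fun _ => dist_nonneg) (fun k => ?_) hlim
  have hc : 0 ≤ n * (n / (n + 1) : ℝ) ^ k := by positivity
  have h1 := (hratio k).1 i
  have h2 := (hratio k).2 i
  have h3 := mul_le_mul_of_nonneg_left (hvstar.2 i) hc
  have h4 := mul_le_mul_of_nonneg_left ((hmem (k + 1)).2 i) hc
  simp only [Pi.one_apply] at h3 h4
  rw [Real.dist_eq, abs_le]
  constructor <;> linarith
end

section
/- (Scaling bound) Let D be an n×n attack matrix with entries in {0,1} and F its categoriser map, and set α = 1/(1+n) and ψ(π) = 1/(π + α·(1 − π)). Then for every π ∈ [0,1] and every u ∈ [0,1]^n, F(π·u)_i ≤ ψ(π) · F(u)_i for every index i. -/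
theorem stmt_7 (n : ℕ) (D : Fin n → Fin n → ℝ)
    (hD : ∀ i j, D i j = 0 ∨ D i j = 1)
    (α : ℝ) (hα : α = 1 / (1 + (n : ℝ)))
    (ψ : ℝ → ℝ) (hψ : ∀ π, ψ π = 1 / (π + α * (1 - π)))
    (π : ℝ) (hπ : π ∈ Set.Icc (0 : ℝ) 1)
    (u : Fin n → ℝ) (hu : u ∈ Set.Icc (0 : Fin n → ℝ) 1) :
    ∀ i, catF D (π • u) i ≤ ψ π * catF D u i := by
  intro i
  obtain ⟨hπ0, hπ1⟩ := hπ
  obtain ⟨hu0, hu1⟩ := hu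
  have hn : (0 : ℝ) < 1 + n := by positivity
  have hαpos : 0 < α := by rw [hα]; positivity
  have hαn : α * (1 + n) = 1 := by rw [hα]; field_simp
  have hα1 : α ≤ 1 := by nlinarith [(Nat.cast_nonneg n : (0 : ℝ) ≤ n)]
  have hscale : ∑ j, D i j * (π • u) j = π * ∑ j, D i j * u j := by
    rw [Finset.mul_sum]
    refine Finset.sum_congr rfl fun j _ => ?_
    simp only [Pi.smul_apply, smul_eq_mul]
    ring
  have hS0 : 0 ≤ ∑ j, D i j * u j := by
    refine Finset.sum_nonneg fun j _ => ?_
    have := hu0 j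
    rcases hD i j with h | h <;> simp_all
  have hSn : ∑ j, D i j * u j ≤ n := by
    have : ∑ j, D i j * u j ≤ ∑ _j : Fin n, (1 : ℝ) := by
      refine Finset.sum_le_sum fun j _ => ?_
      have := hu1 j
      rcases hD i j with h | h <;> simp_all
    simpa using this
  simp only [catF]
  rw [hscale, hψ]
  generalize ∑ j, D i j * u j = S at hS0 hSn
  -- The denominator of `ψ π` is a convex combination of `1` and `α`, hence at least `α`.
  have hden : 0 < π + α * (1 - π) := by nlinarith
  have hαS : α * (1 + S) ≤ 1 := by nlinarith
  rw [one_div_mul_one_div]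
  exact one_div_le_one_div_of_le (by positivity) (by nlinarith)
end

section
/- (Void precedence for the categoriser-based ranking) Let D be an n×n attack matrix with entries in {0,1} and let v* be the unique fixed point of its categoriser map. If argument i has no attackers (row i of D is zero) and argument j has at least one attacker (row j of D is nonzero), then v*_i > v*_j. -/
theorem stmt_12 (n : ℕ) (D : Fin n → Fin n → ℝ)
    (hD : ∀ i j, D i j = 0 ∨ D i j = 1)
    (vstar : Fin n → ℝ) (hvstar : vstar ∈ Set.Icc (0 : Fin n → ℝ) 1)
    (hfix : catF D vstar = vstar)
    (i j : Fin n) (hi : ∀ k, D i k = 0) (hj : ∃ k, D j k ≠ 0) :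
    vstar j < vstar i := by
  have hnn : ∀ a b, 0 ≤ D a b * vstar b := fun a b =>
    mul_nonneg (by rcases hD a b with h | h <;> simp [h]) (hvstar.1 b)
  have hv : ∀ a, vstar a = 1 / (1 + ∑ b, D a b * vstar b) := fun a => (congrFun hfix a).symm
  have hpos : ∀ a, 0 < vstar a := fun a => by
    have := Finset.sum_nonneg fun b (_ : b ∈ Finset.univ) => hnn a b
    rw [hv a]
    positivity
  obtain ⟨k, hk⟩ := hj
  have hsum : 0 < ∑ b, D j b * vstar b :=
    Finset.sum_pos' (fun b _ => hnn j b)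
      ⟨k, Finset.mem_univ k, by simpa [(hD j k).resolve_left hk] using hpos k⟩
  have hone : vstar i = 1 := by rw [hv i]; simp [hi]
  rw [hone, hv j, div_lt_one (by linarith)]
  linarith
end

section
/- (Proposition [P2]) Let D be an n×n attack matrix with entries in {0,1} and let v* be the unique fixed point of its categoriser map. If the set of direct attackers of argument i is contained in that of argument j, i.e., D i k ≤ D j k for every k, then v*_i ≥ v*_j. -/
theorem stmt_14 (n : ℕ) (D : Fin n → Fin n → ℝ)
    (hD : ∀ i j, D i j = 0 ∨ D i j = 1)
    (vstar : Fin n → ℝ) (hvstar : vstar ∈ Set.Icc (0 : Fin n → ℝ) 1)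
    (hfix : catF D vstar = vstar)
    (i j : Fin n) (hrow : ∀ k, D i k ≤ D j k) :
    vstar j ≤ vstar i := by
  have hi : catF D vstar i = vstar i := congrFun hfix i
  have hj : catF D vstar j = vstar j := congrFun hfix j
  -- Both coordinates are values of the antitone map `s ↦ 1 / (1 + s)` on `s ≥ 0`,
  -- taken at the total attacker strengths of `i` and `j`.
  rw [← hi, ← hj]
  have hnn : 0 ≤ ∑ k, D i k * vstar k := Finset.sum_nonneg fun k _ =>
    mul_nonneg (by rcases hD i k with h | h <;> simp [h]) (hvstar.1 k)
  have hle : ∑ k, D i k * vstar k ≤ ∑ k, D j k * vstar k := Finset.sum_le_sum fun k _ =>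
    mul_le_mul_of_nonneg_right (hrow k) (hvstar.1 k)
  exact one_div_le_one_div_of_le (by linarith) (by linarith)
end

section
/- (Strict version of [P2]) Let D be an n×n attack matrix with entries in {0,1} and let v* be the unique fixed point of its categoriser map. If the set of direct attackers of argument i is strictly contained in that of argument j, i.e., D i k ≤ D j k for every k and row i of D differs from row j of D, then v*_i > v*_j. -/
theorem stmt_15 (n : ℕ) (D : Fin n → Fin n → ℝ)
    (hD : ∀ i j, D i j = 0 ∨ D i j = 1)
    (vstar : Fin n → ℝ) (hvstar : vstar ∈ Set.Icc (0 : Fin n → ℝ) 1)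
    (hfix : catF D vstar = vstar)
    (i j : Fin n) (hrow : ∀ k, D i k ≤ D j k) (hne : ∃ k, D i k ≠ D j k) :
    vstar j < vstar i := by
  have hval (l : Fin n) : vstar l = 1 / (1 + ∑ k, D l k * vstar k) := (congrFun hfix l).symm
  have hsum (l : Fin n) : 0 ≤ ∑ k, D l k * vstar k :=
    Finset.sum_nonneg fun k _ => mul_nonneg (by rcases hD l k with h | h <;> simp [h]) (hvstar.1 k)
  have hpos (l : Fin n) : 0 < vstar l := by
    rw [hval l]
    have := hsum l
    positivity
  obtain ⟨k, hk⟩ := hne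
  have hlt : ∑ k, D i k * vstar k < ∑ k, D j k * vstar k :=
    Finset.sum_lt_sum (fun l _ => mul_le_mul_of_nonneg_right (hrow l) (hpos l).le)
      ⟨k, Finset.mem_univ k, mul_lt_mul_of_pos_right (lt_of_le_of_ne (hrow k) hk) (hpos k)⟩
  rw [hval i, hval j]
  exact one_div_lt_one_div_of_lt (by linarith [hsum i]) (by linarith)
end

section
/- (Abstraction: permutation equivariance) Let D be an n×n attack matrix with entries in {0,1}, let σ be a permutation of {1,…,n}, and let D' be the attack matrix defined by D'_{σ(i) σ(j)} = D_{i j} for all i, j. If v* is the unique fixed point of the categoriser map of D and w* is the unique fixed point of the categoriser map of D', then w*_{σ(i)} = v*_i for every i; in particular, for all i, j, v*_i ≥ v*_j iff w*_{σ(i)} ≥ w*_{σ(j)}. -/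
theorem catF_fixed_mul {n : ℕ} {D : Fin n → Fin n → ℝ} (hD : ∀ i j, 0 ≤ D i j)
    {v : Fin n → ℝ} (hv : ∀ i, 0 ≤ v i) (hfix : catF D v = v) (i : Fin n) :
    0 < v i ∧ v i * (1 + ∑ j, D i j * v j) = 1 := by
  have hs : 0 ≤ ∑ j, D i j * v j := Finset.sum_nonneg fun j _ => mul_nonneg (hD i j) (hv j)
  have h : 1 / (1 + ∑ j, D i j * v j) = v i := congrFun hfix i
  rw [← h]
  have hp : 0 < 1 + ∑ j, D i j * v j := by linarith
  exact ⟨one_div_pos.mpr hp, one_div_mul_cancel hp.ne'⟩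

/-- If the ratio of two fixed points at a coordinate `i` is a constant `t` that bounds the inverse
ratio at every coordinate, then `t ≤ 1`. -/
theorem catF_ratio_le_one {n : ℕ} {D : Fin n → Fin n → ℝ} (hD : ∀ i j, 0 ≤ D i j)
    {u v : Fin n → ℝ} (hu : ∀ i, 0 ≤ u i) (hv : ∀ i, 0 ≤ v i)
    (hfu : catF D u = u) (hfv : catF D v = v) {t : ℝ} {i : Fin n}
    (hi : u i = t * v i) (hle : ∀ j, v j ≤ t * u j) : t ≤ 1 := by
  have h1 := (catF_fixed_mul hD hu hfu i).2
  obtain ⟨hpos, h2⟩ := catF_fixed_mul hD hv hfv i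
  have hs : ∑ j, D i j * v j ≤ t * ∑ j, D i j * u j := by
    rw [Finset.mul_sum]
    refine Finset.sum_le_sum fun j _ => ?_
    calc D i j * v j ≤ D i j * (t * u j) := mul_le_mul_of_nonneg_left (hle j) (hD i j)
      _ = t * (D i j * u j) := by ring
  have h3 : 1 + ∑ j, D i j * v j = t * (1 + ∑ j, D i j * u j) := by
    apply mul_left_cancel₀ hpos.ne'
    rw [hi] at h1
    linarith
  linarith

theorem catF_fixed_unique {n : ℕ} {D : Fin n → Fin n → ℝ} (hD : ∀ i j, 0 ≤ D i j)
    {u v : Fin n → ℝ} (hu : ∀ i, 0 ≤ u i) (hv : ∀ i, 0 ≤ v i)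
    (hfu : catF D u = u) (hfv : catF D v = v) : u = v := by
  have hpu : ∀ i, 0 < u i := fun i => (catF_fixed_mul hD hu hfu i).1
  have hpv : ∀ i, 0 < v i := fun i => (catF_fixed_mul hD hv hfv i).1
  funext k
  have : Nonempty (Fin n) := ⟨k⟩
  obtain ⟨i, hi⟩ := Finite.exists_max fun i => max (u i / v i) (v i / u i)
  obtain ⟨t, ht⟩ : ∃ t, t = max (u i / v i) (v i / u i) := ⟨_, rfl⟩
  have huv : ∀ j, u j ≤ t * v j := fun j =>
    (div_le_iff₀ (hpv j)).mp (ht ▸ (le_max_left _ _).trans (hi j))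
  have hvu : ∀ j, v j ≤ t * u j := fun j =>
    (div_le_iff₀ (hpu j)).mp (ht ▸ (le_max_right _ _).trans (hi j))
  have ht1 : t ≤ 1 := by
    rcases max_choice (u i / v i) (v i / u i) with h | h
    · exact catF_ratio_le_one hD hu hv hfu hfv
        ((div_eq_iff (hpv i).ne').mp (ht.trans h).symm) hvu
    · exact catF_ratio_le_one hD hv hu hfv hfu
        ((div_eq_iff (hpu i).ne').mp (ht.trans h).symm) huv
  exact le_antisymm ((huv k).trans (mul_le_of_le_one_left (hv k) ht1))
    ((hvu k).trans (mul_le_of_le_one_left (hu k) ht1))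

theorem stmt_16 (n : ℕ) (D D' : Fin n → Fin n → ℝ)
    (hD : ∀ i j, D i j = 0 ∨ D i j = 1)
    (σ : Equiv.Perm (Fin n))
    (hD' : ∀ i j, D' (σ i) (σ j) = D i j)
    (vstar : Fin n → ℝ) (hvstar : vstar ∈ Set.Icc (0 : Fin n → ℝ) 1)
    (hfixv : catF D vstar = vstar)
    (wstar : Fin n → ℝ) (hwstar : wstar ∈ Set.Icc (0 : Fin n → ℝ) 1)
    (hfixw : catF D' wstar = wstar) :
    (∀ i, wstar (σ i) = vstar i) ∧
      ∀ i j, vstar j ≤ vstar i ↔ wstar (σ j) ≤ wstar (σ i) := by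
  have hnn : ∀ i j, 0 ≤ D i j := fun i j => by rcases hD i j with h | h <;> simp [h]
  have hfix : catF D (fun i => wstar (σ i)) = fun i => wstar (σ i) := by
    funext i
    have h : 1 / (1 + ∑ j, D' (σ i) j * wstar j) = wstar (σ i) := congrFun hfixw (σ i)
    rw [← Equiv.sum_comp σ] at h
    simpa only [catF, hD'] using h
  have heq : ∀ i, wstar (σ i) = vstar i := congrFun
    (catF_fixed_unique hnn (fun i => hwstar.1 (σ i)) hvstar.1 hfix hfixv)
  exact ⟨heq, fun i j => by rw [heq, heq]⟩
end

section
/- (Counter-transitivity) Let D be an n×n attack matrix with entries in {0,1} and let v* be the unique fixed point of its categoriser map. For an argument x, let Att(x) = { j : D x j = 1 } be its set of direct attackers. If for arguments x and y there exists an injective map δ : Att(x) → Att(y) such that v*_{δ(j)} ≥ v*_j for every j ∈ Att(x), then v*_x ≥ v*_y. -/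
/-- The set of direct attackers of argument `x`. -/
def att {n : ℕ} (D : Fin n → Fin n → ℝ) (x : Fin n) : Set (Fin n) := {j | D x j = 1}

theorem stmt_18 (n : ℕ) (D : Fin n → Fin n → ℝ)
    (hD : ∀ i j, D i j = 0 ∨ D i j = 1)
    (vstar : Fin n → ℝ) (hvstar : vstar ∈ Set.Icc (0 : Fin n → ℝ) 1)
    (hfix : catF D vstar = vstar)
    (x y : Fin n) (δ : Fin n → Fin n)
    (hinj : Set.InjOn δ (att D x))
    (hmap : Set.MapsTo δ (att D x) (att D y))
    (hle : ∀ j ∈ att D x, vstar j ≤ vstar (δ j)) :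
    vstar y ≤ vstar x := by
  have h0 : ∀ j, 0 ≤ vstar j := fun j => hvstar.1 j
  have hval : ∀ i, vstar i = 1 / (1 + ∑ j, D i j * vstar j) := fun i => (congrFun hfix i).symm
  have hsum : ∀ i, ∑ j, D i j * vstar j =
      ∑ j ∈ Finset.univ.filter (fun j => D i j = 1), vstar j := by
    intro i
    rw [Finset.sum_filter]
    refine Finset.sum_congr rfl fun j _ => ?_
    rcases hD i j with h | h <;> simp [h]
  have hmem : ∀ i j, j ∈ Finset.univ.filter (fun j => D i j = 1) ↔ j ∈ att D i := by
    simp [att]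
  have key : ∑ j, D x j * vstar j ≤ ∑ j, D y j * vstar j := by
    rw [hsum x, hsum y]
    calc _ ≤ ∑ j ∈ Finset.univ.filter (fun j => D x j = 1), vstar (δ j) :=
          Finset.sum_le_sum fun j hj => hle j ((hmem x j).1 hj)
      _ = ∑ k ∈ (Finset.univ.filter (fun j => D x j = 1)).image δ, vstar k :=
          (Finset.sum_image fun a ha b hb h =>
            hinj ((hmem x a).1 ha) ((hmem x b).1 hb) h).symm
      _ ≤ _ := by
          refine Finset.sum_le_sum_of_subset_of_nonneg ?_ fun j _ _ => h0 j
          exact Finset.image_subset_iff.2 fun j hj => (hmem y _).2 (hmap ((hmem x j).1 hj))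
  have hpos : 0 ≤ ∑ j, D x j * vstar j := by
    rw [hsum x]
    exact Finset.sum_nonneg fun j _ => h0 j
  rw [hval y, hval x]
  exact one_div_le_one_div_of_le (by linarith) (by linarith)
end
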